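/- Let α_p > 0 and σ_μ > 0. (i) If σ_μ > 1/√(2π), then for every x_c ∈ ℝ and m ∈ ℝ the equation Φ((1/σ_μ)·(−x_c/√α_p + θ − m)) = θ has exactly one real solution θ, lying in (0,1). (ii) If σ_μ < 1/√(2π), then there exist x_c ∈ ℝ and m ∈ ℝ such that this equation has at least three distinct solutions θ in (0,1). -/

import Mathlib

/-- The standard normal cumulative distribution function. -/
noncomputable def stdNormalCDF (x : ℝ) : ℝ :=
  ∫ t in Set.Iic x, (Real.sqrt (2 * Real.pi))⁻¹ * Real.exp (-t ^ 2 / 2)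

noncomputable def phiPdf (t : ℝ) : ℝ := (Real.sqrt (2 * Real.pi))⁻¹ * Real.exp (-t ^ 2 / 2)

lemma phiPdf_pos (t : ℝ) : 0 < phiPdf t := by unfold phiPdf; positivity

lemma phiPdf_le (t : ℝ) : phiPdf t ≤ (Real.sqrt (2 * Real.pi))⁻¹ := by
  unfold phiPdf
  have h : Real.exp (-t ^ 2 / 2) ≤ 1 := by
    rw [Real.exp_le_one_iff]; nlinarith [sq_nonneg t]
  exact mul_le_of_le_one_right (by positivity) h

lemma phiPdf_cont : Continuous phiPdf := by unfold phiPdf; fun_prop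

lemma phiPdf_eq : phiPdf = fun t => (Real.sqrt (2 * Real.pi))⁻¹ * Real.exp (-(1/2) * t ^ 2) := by
  funext t; unfold phiPdf; congr 2; ring

lemma phiPdf_int : MeasureTheory.Integrable phiPdf := by
  rw [phiPdf_eq]
  exact (integrable_exp_neg_mul_sq (by norm_num)).const_mul _

lemma phiPdf_integral : ∫ t, phiPdf t = 1 := by
  rw [phiPdf_eq, MeasureTheory.integral_const_mul, integral_gaussian]
  rw [show Real.pi / (1/2) = 2 * Real.pi by ring]
  exact inv_mul_cancel₀ (by positivity)

lemma Phi_eq (x : ℝ) : stdNormalCDF x = ∫ t in Set.Iic x, phiPdf t := rfl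

lemma Phi_symm (x : ℝ) : stdNormalCDF x + stdNormalCDF (-x) = 1 := by
  have h1 : stdNormalCDF (-x) = ∫ t in Set.Ioi x, phiPdf t := by
    have := integral_comp_neg_Iic (-x) phiPdf
    rw [neg_neg] at this
    rw [← this, Phi_eq]
    congr 1; funext t; simp [phiPdf]
  rw [h1, Phi_eq, ← phiPdf_integral]
  exact intervalIntegral.integral_Iic_add_Ioi phiPdf_int.integrableOn phiPdf_int.integrableOn

lemma Phi_deriv (x : ℝ) : HasDerivAt stdNormalCDF (phiPdf x) x := by
  have h : stdNormalCDF = fun y => stdNormalCDF 0 + ∫ t in (0:ℝ)..y, phiPdf t := by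
    funext y
    have := intervalIntegral.integral_Iic_sub_Iic (a := 0) (b := y) (f := phiPdf)
      phiPdf_int.integrableOn phiPdf_int.integrableOn
    rw [← this, Phi_eq, Phi_eq]; ring
  rw [h]
  exact (intervalIntegral.integral_hasDerivAt_right (phiPdf_cont.intervalIntegrable _ _)
    phiPdf_cont.stronglyMeasurable.stronglyMeasurableAtFilter
    phiPdf_cont.continuousAt).const_add _

lemma Phi_strictMono : StrictMono stdNormalCDF :=
  strictMono_of_hasDerivAt_pos Phi_deriv phiPdf_pos

lemma Phi_pos (x : ℝ) : 0 < stdNormalCDF x := by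
  have h0 : 0 ≤ stdNormalCDF (x - 1) := by
    rw [Phi_eq]
    exact MeasureTheory.integral_nonneg fun t => (phiPdf_pos t).le
  exact h0.trans_lt (Phi_strictMono (by linarith))

lemma Phi_lt (x : ℝ) : stdNormalCDF x < 1 := by
  linarith [Phi_symm x, Phi_pos (-x)]

lemma h_deriv (k b m x : ℝ) :
    HasDerivAt (fun θ => stdNormalCDF (k * (b + θ - m)) - θ) (phiPdf (k * (b + x - m)) * k - 1) x := by
  have h1 : HasDerivAt (fun θ => k * (b + θ - m)) k x := by
    simpa using (((hasDerivAt_id x).const_add b).sub_const m).const_mul k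
  exact ((Phi_deriv _).comp x h1).sub (hasDerivAt_id x)

theorem stmt_5 (αp σμ : ℝ) (hαp : 0 < αp) (hσμ : 0 < σμ) :
    (σμ > 1 / Real.sqrt (2 * Real.pi) →
      ∀ xc m : ℝ,
        ∃ θ ∈ Set.Ioo (0 : ℝ) 1,
          stdNormalCDF ((1 / σμ) * (-xc / Real.sqrt αp + θ - m)) = θ ∧
          ∀ θ' : ℝ,
            stdNormalCDF ((1 / σμ) * (-xc / Real.sqrt αp + θ' - m)) = θ' → θ' = θ) ∧
    (σμ < 1 / Real.sqrt (2 * Real.pi) →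
      ∃ xc m : ℝ, ∃ θ₁ θ₂ θ₃ : ℝ,
        θ₁ ∈ Set.Ioo (0 : ℝ) 1 ∧ θ₂ ∈ Set.Ioo (0 : ℝ) 1 ∧ θ₃ ∈ Set.Ioo (0 : ℝ) 1 ∧
        θ₁ ≠ θ₂ ∧ θ₁ ≠ θ₃ ∧ θ₂ ≠ θ₃ ∧
        stdNormalCDF ((1 / σμ) * (-xc / Real.sqrt αp + θ₁ - m)) = θ₁ ∧
        stdNormalCDF ((1 / σμ) * (-xc / Real.sqrt αp + θ₂ - m)) = θ₂ ∧
        stdNormalCDF ((1 / σμ) * (-xc / Real.sqrt αp + θ₃ - m)) = θ₃) := by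
  have hs : 0 < Real.sqrt (2 * Real.pi) := by positivity
  constructor
  · intro h xc m
    generalize -xc / Real.sqrt αp = b
    set k := 1 / σμ with hk
    have hkpos : 0 < k := by positivity
    have hanti : StrictAnti (fun θ => stdNormalCDF (k * (b + θ - m)) - θ) := by
      refine strictAnti_of_hasDerivAt_neg (h_deriv k b m) fun x => ?_
      have h1 := mul_le_mul_of_nonneg_right (phiPdf_le (k * (b + x - m))) hkpos.le
      have h2 : (Real.sqrt (2 * Real.pi))⁻¹ * k < 1 := by
        rw [hk, mul_one_div, div_lt_one hσμ, ← one_div]; exact h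
      linarith
    have hc : Continuous (fun θ => stdNormalCDF (k * (b + θ - m)) - θ) :=
      continuous_iff_continuousAt.2 fun x => (h_deriv k b m x).continuousAt
    obtain ⟨θ, hθ, he⟩ := intermediate_value_Ioo' (zero_le_one' ℝ) hc.continuousOn
      (show (0:ℝ) ∈ _ from ⟨by linarith [Phi_lt (k * (b + 1 - m))], by
        linarith [Phi_pos (k * (b + 0 - m))]⟩)
    refine ⟨θ, hθ, sub_eq_zero.1 he, fun θ' h' => hanti.injective ?_⟩
    exact (sub_eq_zero.2 h').trans he.symm
  · intro h
    set k := 1 / σμ with hk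
    have hkpos : 0 < k := by positivity
    have P0 : stdNormalCDF 0 = 1 / 2 := by
      have := Phi_symm 0
      rw [neg_zero] at this; linarith
    have hd := h_deriv k 0 (1/2) (1/2)
    have hdp : 0 < phiPdf (k * (0 + 1/2 - 1/2)) * k - 1 := by
      have : phiPdf (k * (0 + 1/2 - 1/2)) = (Real.sqrt (2 * Real.pi))⁻¹ := by simp [phiPdf]
      rw [this, hk, mul_one_div, sub_pos, one_lt_div hσμ, ← one_div]; exact h
    have ht := (hasDerivAt_iff_tendsto_slope.1 hd).mono_left
      (nhdsWithin_mono _ (show Set.Ioi (1/2:ℝ) ⊆ {1/2}ᶜ from fun x hx => ne_of_gt hx))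
    obtain ⟨y, hy1, hy2⟩ := ((ht.eventually (lt_mem_nhds hdp)).and
      (Ioo_mem_nhdsGT (show (1/2:ℝ) < 1 by norm_num))).exists
    have hy3 : 0 < stdNormalCDF (k * (0 + y - 1/2)) - y := by
      rw [slope_def_field] at hy1
      have h3 := (div_pos_iff_of_pos_right (sub_pos.2 hy2.1)).1 hy1
      have h4 : k * (0 + 1/2 - 1/2) = 0 := by ring
      simp only [h4, P0] at h3
      linarith
    have hc : Continuous (fun θ => stdNormalCDF (k * (0 + θ - 1/2)) - θ) :=
      continuous_iff_continuousAt.2 fun x => (h_deriv k 0 (1/2) x).continuousAt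
    obtain ⟨θ, hθ, he⟩ := intermediate_value_Ioo' hy2.2.le hc.continuousOn
      (show (0:ℝ) ∈ _ from ⟨by linarith [Phi_lt (k * (0 + 1 - 1/2))], hy3⟩)
    have hy := hy2.1
    have hθ1 := hθ.1
    have hθ2 := hθ.2
    have he' := sub_eq_zero.1 he
    refine ⟨0, 1/2, 1/2, θ, 1 - θ, ⟨by norm_num, by norm_num⟩, ⟨by linarith, by linarith⟩,
      ⟨by linarith, by linarith⟩, by linarith, by intro h; linarith, by intro h; linarith, ?_, ?_, ?_⟩
    · rw [neg_zero, zero_div, ← P0]; congr 1; rw [P0]; ring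
    · rw [neg_zero, zero_div]; exact he'
    · rw [neg_zero, zero_div]
      have h5 := Phi_symm (k * (0 + θ - 1/2))
      rw [show k * (0 + (1 - θ) - 1/2) = -(k * (0 + θ - 1/2)) by ring]
      linarith
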